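/- Let p be a prime, let G be a finite group of order divisible by p, and let S be a Sylow p-subgroup of G. Assume that Ω1(S) ≤ Z(S) and that N_G(S) controls p-fusion in G. Then for every nontrivial subgroup Q of Ω1(S) one has C_G(Q) = (N_G(S) ∩ C_G(Q))·(S·C_G(Q)'), and consequently C_G(Q)/(S·C_G(Q)') is isomorphic to (N_G(S) ∩ C_G(Q))/(N_G(S) ∩ S·C_G(Q)'). -/

import Mathlib

open Subgroup Pointwise
open scoped commutatorElement

/-- `Ω₁(S)`: the subgroup generated by the elements of `S` of order dividing `p`. -/
def omega1 {G : Type*} [Group G] (p : ℕ) (S : Subgroup G) : Subgroup G :=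
  Subgroup.closure {g : G | g ∈ S ∧ g ^ p = 1}

/-- `H` controls `p`-fusion in `G` with respect to the Sylow `p`-subgroup `S`. -/
def ControlsPFusion {G : Type*} [Group G] (S H : Subgroup G) : Prop :=
  ∀ Q : Subgroup G, Q ≤ S → ∀ g : G, (∀ q ∈ Q, g * q * g⁻¹ ∈ S) →
    ∃ h ∈ H, ∃ c ∈ Subgroup.centralizer (Q : Set G), g = h * c

/-- A subgroup whose intersection with `H` contains the derived subgroup of `H`
intersects `H` in a normal subgroup of `H`. -/
theorem normal_subgroupOf_of_commutator_le {G : Type*} [Group G] {H K : Subgroup G}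
    (h : ⁅H, H⁆ ≤ K) : (K.subgroupOf H).Normal := by
  constructor
  rintro ⟨x, hxH⟩ hx ⟨g, hgH⟩
  rw [Subgroup.mem_subgroupOf] at hx ⊢
  show g * x * g⁻¹ ∈ K
  have e : g * x * g⁻¹ = ⁅g, x⁆ * x := by
    rw [commutatorElement_def]; group
  rw [e]
  exact K.mul_mem (h (Subgroup.commutator_mem_commutator hgH hxH)) hx

instance subgroupOf_sup_commutator_normal {G : Type*} [Group G] (A B : Subgroup G) :
    ((A ⊔ ⁅B, B⁆).subgroupOf B).Normal :=
  normal_subgroupOf_of_commutator_le le_sup_right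

instance subgroupOf_inf_sup_commutator_normal {G : Type*} [Group G] (N A B : Subgroup G) :
    ((N ⊓ (A ⊔ ⁅B, B⁆)).subgroupOf (N ⊓ B)).Normal := by
  refine normal_subgroupOf_of_commutator_le (le_inf ?_ ?_)
  · refine (Subgroup.commutator_le.mpr fun g hg x hx => ?_)
    rw [commutatorElement_def]
    exact N.mul_mem (N.mul_mem (N.mul_mem hg.1 hx.1) (N.inv_mem hg.1)) (N.inv_mem hx.1)
  · exact (Subgroup.commutator_mono inf_le_right inf_le_right).trans le_sup_right

theorem stmt18 {G : Type*} [Group G] [Fintype G] (p : ℕ) [Fact p.Prime]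
    (hdvd : p ∣ Fintype.card G) (S : Sylow p G)
    (hcen : omega1 p (S : Subgroup G) ≤
      (S : Subgroup G) ⊓ Subgroup.centralizer ((S : Subgroup G) : Set G))
    (hfus : ControlsPFusion (S : Subgroup G) (Subgroup.normalizer ((S : Subgroup G) : Set G)))
    (Q : Subgroup G) (hQ : Q ≠ ⊥) (hQle : Q ≤ omega1 p (S : Subgroup G)) :
    (((Subgroup.normalizer ((S : Subgroup G) : Set G) ⊓ Subgroup.centralizer (Q : Set G) : Subgroup G) : Set G) *
        (((S : Subgroup G) : Set G) *
          ((⁅Subgroup.centralizer (Q : Set G), Subgroup.centralizer (Q : Set G)⁆ :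
            Subgroup G) : Set G)) =
        (Subgroup.centralizer (Q : Set G) : Set G)) ∧
      Nonempty
        ((Subgroup.centralizer (Q : Set G) ⧸
          (((S : Subgroup G) ⊔
            ⁅Subgroup.centralizer (Q : Set G), Subgroup.centralizer (Q : Set G)⁆).subgroupOf
              (Subgroup.centralizer (Q : Set G)))) ≃*
        ((Subgroup.normalizer ((S : Subgroup G) : Set G) ⊓ Subgroup.centralizer (Q : Set G) : Subgroup G) ⧸
          ((Subgroup.normalizer ((S : Subgroup G) : Set G) ⊓ ((S : Subgroup G) ⊔
            ⁅Subgroup.centralizer (Q : Set G), Subgroup.centralizer (Q : Set G)⁆)).subgroupOf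
              (Subgroup.normalizer ((S : Subgroup G) : Set G) ⊓ Subgroup.centralizer (Q : Set G))))) := by
  classical
  set C : Subgroup G := Subgroup.centralizer (Q : Set G) with hC
  set N : Subgroup G := Subgroup.normalizer ((S : Subgroup G) : Set G) with hN
  set K : Subgroup G := (S : Subgroup G) ⊔ ⁅C, C⁆ with hK
  have hSC : (S : Subgroup G) ≤ C := by
    intro s hs
    rw [hC, Subgroup.mem_centralizer_iff]
    intro q hq
    have h := (hcen (hQle hq)).2
    exact (Subgroup.mem_centralizer_iff.mp h s hs).symm
  have hCC : ⁅C, C⁆ ≤ C := Subgroup.commutator_le.mpr fun g hg x hx => by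
    rw [commutatorElement_def]
    exact C.mul_mem (C.mul_mem (C.mul_mem hg hx) (C.inv_mem hg)) (C.inv_mem hx)
  have hKC : K ≤ C := sup_le hSC hCC
  have hprod : ((S : Subgroup G) : Set G) * ((⁅C, C⁆ : Subgroup G) : Set G) = (K : Set G) := by
    apply Set.Subset.antisymm
    · rintro _ ⟨a, ha, b, hb, rfl⟩
      exact K.mul_mem ((le_sup_left : (S : Subgroup G) ≤ K) ha)
        ((le_sup_right : ⁅C, C⁆ ≤ K) hb)
    · intro x hx
      have hx' : x ∈ (S : Subgroup G) ⊔ ⁅C, C⁆ := hx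
      rw [Subgroup.sup_eq_closure_mul] at hx'
      have key : ∀ a ∈ C, ∀ b ∈ ⁅C, C⁆, a⁻¹ * b * a ∈ ⁅C, C⁆ := by
        intro a ha b hb
        have e : a⁻¹ * b * a = ⁅a⁻¹, b⁆ * b := by
          rw [commutatorElement_def]; group
        rw [e]
        exact mul_mem (Subgroup.commutator_mem_commutator (C.inv_mem ha) (hCC hb)) hb
      induction hx' using Subgroup.closure_induction with
      | mem x h => exact h
      | one => exact ⟨1, one_mem _, 1, one_mem _, by simp⟩
      | mul x y hx1 hy1 ihx ihy =>
        obtain ⟨a, ha, b, hb, rfl⟩ := ihx (by rw [hK, Subgroup.sup_eq_closure_mul]; exact hx1)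
        obtain ⟨c, hc, d, hd, rfl⟩ := ihy (by rw [hK, Subgroup.sup_eq_closure_mul]; exact hy1)
        refine ⟨a * c, mul_mem ha hc, (c⁻¹ * b * c) * d,
          mul_mem (key c (hSC hc) b hb) hd, ?_⟩
        simp only; group
      | inv x hx1 ihx =>
        obtain ⟨a, ha, b, hb, rfl⟩ := ihx (by rw [hK, Subgroup.sup_eq_closure_mul]; exact hx1)
        refine ⟨a⁻¹, inv_mem ha, a⁻¹⁻¹ * b⁻¹ * a⁻¹,
          key a⁻¹ (inv_mem (hSC ha)) _ (inv_mem hb), ?_⟩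
        simp only; group
  have hfr := Sylow.normalizer_sup_eq_top' (S.subtype hSC) (N := K.subgroupOf C) (by
    intro x hx
    have hx' : (x : G) ∈ (S : Subgroup G) := hx
    exact (le_sup_left : (S : Subgroup G) ≤ K) hx')
  have hfac : ∀ c ∈ C, ∃ n ∈ N ⊓ C, ∃ k ∈ K, n * k = c := by
    intro c hc
    have hm : (⟨c, hc⟩ : C) ∈ (⊤ : Subgroup C) := trivial
    rw [← hfr, Subgroup.mem_sup_of_normal_right] at hm
    obtain ⟨n, hn, k, hk, h⟩ := hm
    refine ⟨n, ⟨?_, n.2⟩, k, hk, congrArg Subtype.val h⟩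
    have hn := Subgroup.mem_normalizer_iff.mp hn
    refine Subgroup.mem_normalizer_iff.mpr fun x => ⟨fun hx => ?_, fun hx => ?_⟩
    · exact (hn ⟨x, hSC hx⟩).mp hx
    · have hxC : x ∈ C := by
        have := C.mul_mem (C.mul_mem (C.inv_mem n.2) (hSC hx)) n.2
        simpa [mul_assoc] using this
      exact (hn ⟨x, hxC⟩).mpr hx
  constructor
  · rw [hprod]
    apply Set.Subset.antisymm
    · rintro _ ⟨a, ha, b, hb, rfl⟩
      exact C.mul_mem ha.2 (hKC hb)
    · intro c hc
      obtain ⟨n, hn, k, hk, h⟩ := hfac c hc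
      exact ⟨n, hn, k, hk, h⟩
  · let f : (N ⊓ C : Subgroup G) →* C ⧸ K.subgroupOf C :=
      (QuotientGroup.mk' (K.subgroupOf C)).comp (Subgroup.inclusion inf_le_right)
    have hf : Function.Surjective f := by
      intro y
      obtain ⟨⟨c, hc⟩, rfl⟩ := QuotientGroup.mk'_surjective _ y
      obtain ⟨n, hn, k, hk, rfl⟩ := hfac c hc
      refine ⟨⟨n, hn⟩, ?_⟩
      refine QuotientGroup.eq.mpr ?_
      rw [Subgroup.mem_subgroupOf]
      simpa using hk
    have hker : f.ker = (N ⊓ K).subgroupOf (N ⊓ C) := by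
      ext x
      rw [MonoidHom.mem_ker, Subgroup.mem_subgroupOf]
      have : f x = 1 ↔ (x : G) ∈ K := by
        refine (QuotientGroup.eq_one_iff _).trans ?_
        rw [Subgroup.mem_subgroupOf]; rfl
      rw [this]
      exact ⟨fun h => ⟨x.2.1, h⟩, fun h => h.2⟩
    exact ⟨((QuotientGroup.quotientMulEquivOfEq hker.symm).trans
      (QuotientGroup.quotientKerEquivOfSurjective f hf)).symm⟩
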